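/- Let w : ℝ² → ℝ² be of the form w = p + q, where both components of p are affine functions and q ∈ Ŝ(K) (both components polynomials of total degree at most 2 with q(x)·nᵢ = 0 for all x ∈ eᵢ, i ∈ {1,2,3}). Suppose w satisfies: (i) ∫_{eᵢ} γ (w · nᵢ) ds = 0 for every affine γ : ℝ² → ℝ and each i ∈ {1,2,3}; (ii) ∫_K ∇γ · w dx = 0 for every affine γ : ℝ² → ℝ; and (iii) ∫_K ∇⊥(λ₁λ₂λ₃) · w dx = 0. Then w = 0. -/

import Mathlib

open MeasureTheory

noncomputable section

/-- Dot product on `ℝ²`. -/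
def dot (a b : ℝ × ℝ) : ℝ := a.1 * b.1 + a.2 * b.2

/-- Evaluation of a two-variable polynomial at a point of `ℝ²`. -/
def pev (P : MvPolynomial (Fin 2) ℝ) (x : ℝ × ℝ) : ℝ :=
  MvPolynomial.eval ![x.1, x.2] P

/-- Gradient `∇g = (∂g/∂x₁, ∂g/∂x₂)` of `g : ℝ² → ℝ`. -/
def grad2 (g : ℝ × ℝ → ℝ) (x : ℝ × ℝ) : ℝ × ℝ :=
  (fderiv ℝ g x (1, 0), fderiv ℝ g x (0, 1))

/-- Skew gradient `∇⊥g = (−∂g/∂x₂, ∂g/∂x₁)` of `g : ℝ² → ℝ`. -/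
def perpGrad (g : ℝ × ℝ → ℝ) (x : ℝ × ℝ) : ℝ × ℝ :=
  (-(fderiv ℝ g x (0, 1)), fderiv ℝ g x (1, 0))

/-- Line integral `∫_{[a,b]} h ds = ‖b − a‖ ∫₀¹ h((1−s)a + sb) ds`
(Euclidean length). -/
def lineIntegral (h : ℝ × ℝ → ℝ) (a b : ℝ × ℝ) : ℝ :=
  Real.sqrt ((b.1 - a.1) ^ 2 + (b.2 - a.2) ^ 2) *
    ∫ s in (0 : ℝ)..1, h ((1 - s) • a + s • b)

def IsQuad (f : ℝ × ℝ → ℝ) : Prop :=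
  ∃ c0 c1 c2 c3 c4 c5 : ℝ, ∀ x : ℝ × ℝ,
    f x = c0 + c1 * x.1 + c2 * x.2 + c3 * x.1 ^ 2 + c4 * (x.1 * x.2) + c5 * x.2 ^ 2

theorem IsQuad.lin {f g : ℝ × ℝ → ℝ} (hf : IsQuad f) (hg : IsQuad g) (k l : ℝ) :
    IsQuad (fun x => k * f x + l * g x) := by
  obtain ⟨c0, c1, c2, c3, c4, c5, hc⟩ := hf
  obtain ⟨d0, d1, d2, d3, d4, d5, hd⟩ := hg
  refine ⟨k*c0+l*d0, k*c1+l*d1, k*c2+l*d2, k*c3+l*d3, k*c4+l*d4, k*c5+l*d5, fun x => ?_⟩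
  simp only [hc, hd]; ring

theorem IsQuad.comp {f : ℝ × ℝ → ℝ} (hf : IsQuad f) (o a b : ℝ × ℝ) :
    IsQuad (fun z => f (o + z.1 • a + z.2 • b)) := by
  obtain ⟨c0, c1, c2, c3, c4, c5, hc⟩ := hf
  refine ⟨c0 + c1 * o.1 + c2 * o.2 + c3 * o.1 ^ 2 + c4 * (o.1 * o.2) + c5 * o.2 ^ 2,
    c1 * a.1 + c2 * a.2 + 2 * c3 * o.1 * a.1 + c4 * (o.1 * a.2 + o.2 * a.1) + 2 * c5 * o.2 * a.2,
    c1 * b.1 + c2 * b.2 + 2 * c3 * o.1 * b.1 + c4 * (o.1 * b.2 + o.2 * b.1) + 2 * c5 * o.2 * b.2,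
    c3 * a.1 ^ 2 + c4 * (a.1 * a.2) + c5 * a.2 ^ 2,
    2 * c3 * a.1 * b.1 + c4 * (a.1 * b.2 + a.2 * b.1) + 2 * c5 * a.2 * b.2,
    c3 * b.1 ^ 2 + c4 * (b.1 * b.2) + c5 * b.2 ^ 2, fun x => ?_⟩
  simp only [hc, Prod.fst_add, Prod.snd_add, Prod.smul_fst, Prod.smul_snd, smul_eq_mul]; ring

theorem isQuad_pev (P : MvPolynomial (Fin 2) ℝ) (h : P.totalDegree ≤ 2) : IsQuad (pev P) := by
  have e : pev P = ∑ d ∈ P.support, fun x : ℝ × ℝ => P.coeff d * (x.1 ^ d 0 * x.2 ^ d 1) := by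
    funext x
    rw [pev, MvPolynomial.eval_eq', Finset.sum_apply]
    simp [Fin.prod_univ_two]
  rw [e]
  refine Finset.sum_induction _ IsQuad ?_ ?_ ?_
  · intro f g hf hg
    have := hf.lin hg 1 1
    simp only [one_mul] at this
    exact this
  · exact ⟨0, 0, 0, 0, 0, 0, fun x => by simp⟩
  · intro d hd
    have h1 : d 0 + d 1 ≤ 2 := by
      have := (MvPolynomial.le_totalDegree hd).trans h
      rw [Finsupp.sum_fintype _ _ (by simp)] at this
      simpa [Fin.sum_univ_two] using this
    generalize P.coeff d = c
    generalize d 0 = i at *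
    generalize d 1 = j at *
    have hi : i ≤ 2 := by omega
    have hj : j ≤ 2 := by omega
    interval_cases i <;> interval_cases j <;> first | omega | skip
    · exact ⟨c, 0, 0, 0, 0, 0, fun x => by ring⟩
    · exact ⟨0, 0, c, 0, 0, 0, fun x => by ring⟩
    · exact ⟨0, 0, 0, 0, 0, c, fun x => by ring⟩
    · exact ⟨0, c, 0, 0, 0, 0, fun x => by ring⟩
    · exact ⟨0, 0, 0, 0, c, 0, fun x => by ring⟩
    · exact ⟨0, 0, 0, c, 0, 0, fun x => by ring⟩

theorem int_poly (c0 c1 c2 c3 c4 c5 u : ℝ) :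
    ∫ t in (0:ℝ)..u, (c0 + c1 * t + c2 * t ^ 2 + c3 * t ^ 3 + c4 * t ^ 4 + c5 * t ^ 5)
      = c0 * u + c1 * u ^ 2 / 2 + c2 * u ^ 3 / 3 + c3 * u ^ 4 / 4 + c4 * u ^ 5 / 5
        + c5 * u ^ 6 / 6 := by
  rw [intervalIntegral.integral_eq_sub_of_hasDerivAt
    (f := fun u => c0 * u + c1 * u ^ 2 / 2 + c2 * u ^ 3 / 3 + c3 * u ^ 4 / 4 + c4 * u ^ 5 / 5
        + c5 * u ^ 6 / 6)]
  · ring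
  · intro x _
    have hp : ∀ (c : ℝ) (k : ℕ), HasDerivAt (fun u : ℝ => c * u ^ (k+1) / ((k:ℝ) + 1)) (c * x ^ k) x := by
      intro c k
      have := (((hasDerivAt_pow (k+1) x).const_mul c).div_const ((k:ℝ)+1))
      refine this.congr_deriv ?_
      have : (k:ℝ) + 1 ≠ 0 := by positivity
      push_cast
      field_simp
    have := (((((hp c0 0).add (hp c1 1)).add (hp c2 2)).add (hp c3 3)).add (hp c4 4)).add (hp c5 5)
    convert this using 1
    · funext u; simp; norm_num
    · ring
  · exact Continuous.intervalIntegrable (by fun_prop) _ _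

def Tri : Set (ℝ × ℝ) := {z | 0 ≤ z.1 ∧ 0 ≤ z.2 ∧ z.1 + z.2 ≤ 1}

theorem isClosed_Tri : IsClosed Tri := by
  refine (isClosed_le continuous_const continuous_fst).inter
    ((isClosed_le continuous_const continuous_snd).inter
      (isClosed_le (continuous_fst.add continuous_snd) continuous_const))

theorem isCompact_Tri : IsCompact Tri := by
  refine (isCompact_Icc (a := ((0:ℝ),(0:ℝ))) (b := ((1:ℝ),(1:ℝ)))).of_isClosed_subset isClosed_Tri ?_
  rintro ⟨s, t⟩ ⟨h1, h2, h3⟩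
  simp only at h1 h2 h3
  exact ⟨⟨h1, h2⟩, ⟨by simp only; linarith, by simp only; linarith⟩⟩

theorem convex_Tri : Convex ℝ Tri := by
  rintro ⟨s, t⟩ ⟨h1, h2, h3⟩ ⟨s', t'⟩ ⟨h1', h2', h3'⟩ a b ha hb hab
  simp only at h1 h2 h3 h1' h2' h3'
  refine ⟨?_, ?_, ?_⟩ <;> simp only [Prod.fst_add, Prod.snd_add, Prod.smul_fst, Prod.smul_snd, smul_eq_mul]
  · positivity
  · positivity
  · nlinarith

theorem int_Tri (f : ℝ × ℝ → ℝ) (hf : Continuous f) :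
    ∫ z in Tri, f z = ∫ s in (0:ℝ)..1, ∫ t in (0:ℝ)..(1 - s), f (s, t) := by
  have hi : IntegrableOn f Tri := hf.continuousOn.integrableOn_compact isCompact_Tri
  have hm : MeasurableSet Tri := isClosed_Tri.measurableSet
  rw [← integral_indicator hm, Measure.volume_eq_prod,
    integral_prod _ ((integrable_indicator_iff hm).2 hi)]
  rw [intervalIntegral.integral_of_le zero_le_one, ← integral_Icc_eq_integral_Ioc,
    ← integral_indicator measurableSet_Icc]
  congr 1
  funext s
  by_cases hs : s ∈ Set.Icc (0:ℝ) 1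
  · rw [Set.indicator_of_mem hs, intervalIntegral.integral_of_le (by linarith [hs.2]),
      ← integral_Icc_eq_integral_Ioc, ← integral_indicator measurableSet_Icc]
    congr 1
    funext t
    have : ((s, t) ∈ Tri) ↔ t ∈ Set.Icc 0 (1 - s) := by
      constructor
      · rintro ⟨_, h2, h3⟩
        exact ⟨h2, by simp only at h3; linarith⟩
      · rintro ⟨h2, h3⟩
        exact ⟨hs.1, h2, by simp only; linarith⟩
    by_cases h : t ∈ Set.Icc 0 (1 - s)
    · rw [Set.indicator_of_mem h, Set.indicator_of_mem (this.2 h)]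
    · rw [Set.indicator_of_notMem h, Set.indicator_of_notMem (fun h' => h (this.1 h'))]
  · rw [Set.indicator_of_notMem hs]
    have : ∀ t, Tri.indicator f (s, t) = 0 := by
      intro t
      apply Set.indicator_of_notMem
      rintro ⟨h1, h2, h3⟩
      simp only at h1 h2 h3
      exact hs ⟨h1, by linarith⟩
    simp [this]

theorem int_Tri_poly (f : ℝ × ℝ → ℝ) (c00 c10 c01 c20 c11 c02 c30 c21 c12 c03 c40 c31 c22 c13 c04 : ℝ)
    (h : ∀ s t, f (s, t) = c00 + c10 * s + c01 * t + c20 * s ^ 2 + c11 * (s * t) + c02 * t ^ 2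
      + c30 * s ^ 3 + c21 * (s ^ 2 * t) + c12 * (s * t ^ 2) + c03 * t ^ 3
      + c40 * s ^ 4 + c31 * (s ^ 3 * t) + c22 * (s ^ 2 * t ^ 2) + c13 * (s * t ^ 3) + c04 * t ^ 4) :
    ∫ z in Tri, f z = c00 / 2 + c10 / 6 + c01 / 6 + c20 / 12 + c11 / 24 + c02 / 12
      + c30 / 20 + c21 / 60 + c12 / 60 + c03 / 20
      + c40 / 30 + c31 / 120 + c22 / 180 + c13 / 120 + c04 / 30 := by
  have hc : Continuous f := by
    have : f = fun z : ℝ × ℝ => c00 + c10 * z.1 + c01 * z.2 + c20 * z.1 ^ 2 + c11 * (z.1 * z.2) + c02 * z.2 ^ 2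
      + c30 * z.1 ^ 3 + c21 * (z.1 ^ 2 * z.2) + c12 * (z.1 * z.2 ^ 2) + c03 * z.2 ^ 3
      + c40 * z.1 ^ 4 + c31 * (z.1 ^ 3 * z.2) + c22 * (z.1 ^ 2 * z.2 ^ 2) + c13 * (z.1 * z.2 ^ 3) + c04 * z.2 ^ 4 := by
      funext ⟨s, t⟩; exact h s t
    rw [this]; fun_prop
  rw [int_Tri f hc]
  have inner : ∀ s : ℝ, ∫ t in (0:ℝ)..(1 - s), f (s, t) =
      (c00 + c10 * s + c20 * s ^ 2 + c30 * s ^ 3 + c40 * s ^ 4) * (1 - s)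
      + (c01 + c11 * s + c21 * s ^ 2 + c31 * s ^ 3) * (1 - s) ^ 2 / 2
      + (c02 + c12 * s + c22 * s ^ 2) * (1 - s) ^ 3 / 3
      + (c03 + c13 * s) * (1 - s) ^ 4 / 4 + c04 * (1 - s) ^ 5 / 5 := by
    intro s
    have := int_poly (c00 + c10 * s + c20 * s ^ 2 + c30 * s ^ 3 + c40 * s ^ 4)
      (c01 + c11 * s + c21 * s ^ 2 + c31 * s ^ 3) (c02 + c12 * s + c22 * s ^ 2)
      (c03 + c13 * s) c04 0 (1 - s)
    rw [zero_mul, zero_div, add_zero] at this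
    rw [← this]
    congr 1
    funext t
    rw [h]; ring
  simp only [inner]
  have := int_poly (c00 + c01 / 2 + c02 / 3 + c03 / 4 + c04 / 5)
    (c10 - c00 + c11 / 2 - c01 + c12 / 3 - c02 + c13 / 4 - c03 - c04)
    (c20 - c10 + c21 / 2 - c11 + c01 / 2 + c22 / 3 - c12 + c02 - c13 + c03 * 3 / 2 + 2 * c04)
    (c30 - c20 + c31 / 2 - c21 + c11 / 2 - c22 + c12 - c02 / 3 + c13 * 3 / 2 - c03 - 2 * c04)
    (c40 - c30 - c31 + c21 / 2 + c22 - c12 / 3 - c13 + c03 / 4 + c04)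
    (-c40 + c31 / 2 - c22 / 3 + c13 / 4 - c04 / 5) 1
  refine Eq.trans ?_ (this.trans ?_)
  · congr 1
    funext s
    ring
  · ring

/-- The reference-to-physical linear map. -/
def Lmap (a b : ℝ × ℝ) : ℝ × ℝ →L[ℝ] ℝ × ℝ :=
  (ContinuousLinearMap.fst ℝ ℝ ℝ).smulRight a + (ContinuousLinearMap.snd ℝ ℝ ℝ).smulRight b

theorem Lmap_apply (a b z : ℝ × ℝ) : Lmap a b z = z.1 • a + z.2 • b := by
  simp [Lmap]

theorem Lmap_inj (a b : ℝ × ℝ) (hD : a.1 * b.2 - a.2 * b.1 ≠ 0) (z : ℝ × ℝ)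
    (h : z.1 • a + z.2 • b = 0) : z = 0 := by
  have h1 := congrArg Prod.fst h
  have h2 := congrArg Prod.snd h
  simp only [Prod.fst_add, Prod.snd_add, Prod.smul_fst, Prod.smul_snd, smul_eq_mul, Prod.fst_zero, Prod.snd_zero] at h1 h2
  ext
  · apply mul_right_cancel₀ hD
    simp only [Prod.fst_zero]
    linear_combination b.2 * h1 - b.1 * h2
  · apply mul_right_cancel₀ hD
    simp only [Prod.snd_zero]
    linear_combination a.1 * h2 - a.2 * h1

theorem hull_eq (o a b : ℝ × ℝ) :
    convexHull ℝ {o, o + a, o + b} = (fun z : ℝ × ℝ => o + z.1 • a + z.2 • b) '' Tri := by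
  apply Set.Subset.antisymm
  · apply convexHull_min
    · rintro x (rfl | rfl | rfl)
      · exact ⟨(0, 0), by simp [Tri], by simp⟩
      · exact ⟨(1, 0), by simp [Tri], by simp⟩
      · exact ⟨(0, 1), by simp [Tri], by simp⟩
    · have : (fun z : ℝ × ℝ => o + z.1 • a + z.2 • b) '' Tri
          = (fun x => o + x) '' ((Lmap a b) '' Tri) := by
        rw [Set.image_image]
        simp only [Lmap_apply, add_assoc]
      rw [this]
      exact (convex_Tri.linear_image (Lmap a b).toLinearMap).translate o
  · rintro _ ⟨⟨s, t⟩, ⟨h1, h2, h3⟩, rfl⟩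
    simp only at h1 h2 h3
    have hc := convex_convexHull ℝ ({o, o + a, o + b} : Set (ℝ × ℝ))
    have := hc.sum_mem (t := Finset.univ) (w := ![1 - s - t, s, t]) (z := ![o, o + a, o + b])
      (by intro i _; fin_cases i <;> simp <;> linarith)
      (by simp [Fin.sum_univ_three]; ring)
      (by intro i _; apply subset_convexHull; fin_cases i <;> simp)
    convert this using 1
    simp only [Fin.sum_univ_three]
    ext <;> simp <;> ring

theorem int_hull (o a b : ℝ × ℝ) (hD : a.1 * b.2 - a.2 * b.1 ≠ 0) (g : ℝ × ℝ → ℝ)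
    (h : ∫ x in convexHull ℝ {o, o + a, o + b}, g x = 0) :
    ∫ z in Tri, g (o + z.1 • a + z.2 • b) = 0 := by
  rw [hull_eq, integral_image_eq_integral_abs_det_fderiv_smul volume
    isClosed_Tri.measurableSet (f' := fun _ => Lmap a b)] at h
  · simp only [smul_eq_mul] at h
    rw [integral_const_mul] at h
    refine (mul_eq_zero.1 h).resolve_left ?_
    intro h0
    rw [abs_eq_zero] at h0
    have hk := LinearMap.bot_lt_ker_of_det_eq_zero (f := (Lmap a b).toLinearMap) h0
    apply hk.ne
    symm
    rw [LinearMap.ker_eq_bot']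
    intro z hz
    exact Lmap_inj a b hD z (by rw [← Lmap_apply]; exact hz)
  · intro x _
    have := ((Lmap a b).hasFDerivAt (x := x)).const_add o
    refine HasFDerivAt.hasFDerivWithinAt ?_
    convert this using 1
    funext z
    rw [Lmap_apply, add_assoc]
  · intro z _ z' _ hzz
    have := Lmap_inj a b hD (z - z') ?_
    · exact sub_eq_zero.1 this
    · simp only at hzz
      rw [add_assoc, add_assoc, add_right_inj] at hzz
      rw [← Lmap_apply, map_sub, Lmap_apply, Lmap_apply, hzz, sub_self]

theorem aff_repr (f : (ℝ × ℝ) →ᵃ[ℝ] ℝ) : ∃ A B C : ℝ, ∀ x : ℝ × ℝ, f x = A * x.1 + B * x.2 + C := by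
  refine ⟨f.linear (1, 0), f.linear (0, 1), f 0, fun x => ?_⟩
  have h1 : f x = f.linear x + f 0 := by
    have := f.map_vadd 0 x
    simpa using this
  have h2 : x = x.1 • ((1:ℝ), (0:ℝ)) + x.2 • ((0:ℝ), (1:ℝ)) := by ext <;> simp
  rw [h1]
  conv_lhs => rw [h2]
  rw [map_add, map_smul, map_smul, smul_eq_mul, smul_eq_mul]
  ring

theorem aff_zero (f : (ℝ × ℝ) →ᵃ[ℝ] ℝ) (o a b : ℝ × ℝ) (hD : a.1 * b.2 - a.2 * b.1 ≠ 0)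
    (h0 : f o = 0) (h1 : f (o + a) = 0) (h2 : f (o + b) = 0) (x : ℝ × ℝ) : f x = 0 := by
  obtain ⟨A, B, C, h⟩ := aff_repr f
  rw [h] at h0 h1 h2 ⊢
  simp only [Prod.fst_add, Prod.snd_add] at h1 h2
  have hA : A = 0 := by
    apply mul_right_cancel₀ hD
    linear_combination b.2 * (h1 - h0) - a.2 * (h2 - h0)
  have hB : B = 0 := by
    apply mul_right_cancel₀ hD
    linear_combination a.1 * (h2 - h0) - b.1 * (h1 - h0)
  subst hA hB
  linarith

theorem cross_zero (n e u : ℝ × ℝ) (hn : n.1 ^ 2 + n.2 ^ 2 = 1) (he : dot n e = 0)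
    (hu : dot u n = 0) : u.1 * e.2 - u.2 * e.1 = 0 := by
  unfold dot at he hu
  have h1 : (u.1 * e.2 - u.2 * e.1) * n.1 = 0 := by linear_combination e.2 * hu - u.2 * he
  have h2 : (u.1 * e.2 - u.2 * e.1) * n.2 = 0 := by linear_combination -e.1 * hu + u.1 * he
  linear_combination (-(u.1 * e.2 - u.2 * e.1)) * hn + n.1 * h1 + n.2 * h2

theorem vec_zero (a b u : ℝ × ℝ) (hD : a.1 * b.2 - a.2 * b.1 ≠ 0)
    (h1 : u.1 * a.2 - u.2 * a.1 = 0) (h2 : u.1 * b.2 - u.2 * b.1 = 0) : u = 0 := by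
  ext
  · apply mul_right_cancel₀ hD
    simp only [Prod.fst_zero]
    linear_combination a.1 * h2 - b.1 * h1
  · apply mul_right_cancel₀ hD
    simp only [Prod.snd_zero]
    linear_combination a.2 * h2 - b.2 * h1

theorem edge_lemma (U V n : ℝ × ℝ) (p : (ℝ × ℝ) →ᵃ[ℝ] ℝ × ℝ) (w : ℝ × ℝ → ℝ × ℝ)
    (hw : ∀ x ∈ segment ℝ U V, dot (w x) n = dot (p x) n)
    (γ₁ γ₂ : (ℝ × ℝ) →ᵃ[ℝ] ℝ) (h11 : γ₁ U = 1) (h12 : γ₁ V = 0) (h21 : γ₂ U = 0) (h22 : γ₂ V = 1)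
    (he : ∀ γ : (ℝ × ℝ) →ᵃ[ℝ] ℝ, lineIntegral (fun x => γ x * dot (w x) n) U V = 0) :
    dot (p U) n = 0 ∧ dot (p V) n = 0 := by
  have hl : Real.sqrt ((V.1 - U.1) ^ 2 + (V.2 - U.2) ^ 2) ≠ 0 := by
    intro h
    rw [Real.sqrt_eq_zero (by positivity)] at h
    have e1 : V.1 - U.1 = 0 := by nlinarith [sq_nonneg (V.1 - U.1), sq_nonneg (V.2 - U.2)]
    have e2 : V.2 - U.2 = 0 := by nlinarith [sq_nonneg (V.1 - U.1), sq_nonneg (V.2 - U.2)]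
    have : U = V := by ext <;> linarith
    rw [this, h12] at h11
    norm_num at h11
  have key : ∀ γ : (ℝ × ℝ) →ᵃ[ℝ] ℝ,
      (γ U * (2 * dot (p U) n + dot (p V) n) + γ V * (dot (p U) n + 2 * dot (p V) n)) = 0 := by
    intro γ
    have h := (mul_eq_zero.1 (he γ)).resolve_left hl
    have hc : ∫ s in (0:ℝ)..1, (fun x => γ x * dot (w x) n) ((1 - s) • U + s • V) =
        ∫ s in (0:ℝ)..1, (γ U * dot (p U) n
          + (γ U * dot (p V) n + γ V * dot (p U) n - 2 * γ U * dot (p U) n) * s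
          + (γ U - γ V) * (dot (p U) n - dot (p V) n) * s ^ 2 + 0 * s ^ 3 + 0 * s ^ 4 + 0 * s ^ 5) := by
      apply intervalIntegral.integral_congr
      intro s hs
      rw [Set.uIcc_of_le zero_le_one] at hs
      have hm : (1 - s) • U + s • V ∈ segment ℝ U V :=
        ⟨1 - s, s, by linarith [hs.2], hs.1, by ring, rfl⟩
      simp only
      rw [hw _ hm, ← AffineMap.lineMap_apply_module, AffineMap.apply_lineMap, AffineMap.apply_lineMap,
        AffineMap.lineMap_apply_module, AffineMap.lineMap_apply_module]
      simp only [dot, Prod.fst_add, Prod.snd_add, Prod.smul_fst, Prod.smul_snd, smul_eq_mul]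
      ring
    rw [hc, int_poly] at h
    linear_combination 6 * h
  have k1 := key γ₁
  have k2 := key γ₂
  rw [h11, h12] at k1
  rw [h21, h22] at k2
  constructor <;> linarith

theorem perpGrad_prod (A0 B0 C0 A1 B1 C1 A2 B2 C2 : ℝ) (x : ℝ × ℝ) :
    perpGrad (fun y => (A0 * y.1 + B0 * y.2 + C0) * (A1 * y.1 + B1 * y.2 + C1)
      * (A2 * y.1 + B2 * y.2 + C2)) x =
    (-(B0 * (A1 * x.1 + B1 * x.2 + C1) * (A2 * x.1 + B2 * x.2 + C2)
      + B1 * (A0 * x.1 + B0 * x.2 + C0) * (A2 * x.1 + B2 * x.2 + C2)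
      + B2 * (A0 * x.1 + B0 * x.2 + C0) * (A1 * x.1 + B1 * x.2 + C1)),
     (A0 * (A1 * x.1 + B1 * x.2 + C1) * (A2 * x.1 + B2 * x.2 + C2)
      + A1 * (A0 * x.1 + B0 * x.2 + C0) * (A2 * x.1 + B2 * x.2 + C2)
      + A2 * (A0 * x.1 + B0 * x.2 + C0) * (A1 * x.1 + B1 * x.2 + C1))) := by
  have h : ∀ A B C : ℝ, HasFDerivAt (fun y : ℝ × ℝ => A * y.1 + B * y.2 + C)
      (A • ContinuousLinearMap.fst ℝ ℝ ℝ + B • ContinuousLinearMap.snd ℝ ℝ ℝ) x := fun A B C =>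
    ((hasFDerivAt_fst.const_mul A).add (hasFDerivAt_snd.const_mul B)).add_const C
  have := (((h A0 B0 C0).mul (h A1 B1 C1)).mul (h A2 B2 C2)).fderiv
  have e : fderiv ℝ (fun y : ℝ × ℝ => (A0 * y.1 + B0 * y.2 + C0) * (A1 * y.1 + B1 * y.2 + C1)
      * (A2 * y.1 + B2 * y.2 + C2)) x = _ := this
  rw [perpGrad, e]
  ext <;> simp <;> ring

theorem pos_aux (a b : ℝ × ℝ) (hD : a.1 * b.2 - a.2 * b.1 ≠ 0) :
    0 < a.1 ^ 2 + a.2 ^ 2 - (a.1 * b.1 + a.2 * b.2) + (b.1 ^ 2 + b.2 ^ 2) := by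
  have h : 0 < a.1 ^ 2 + a.2 ^ 2 := by
    by_contra hneg
    have ha1 : a.1 = 0 := by nlinarith [sq_nonneg a.1, sq_nonneg a.2]
    have ha2 : a.2 = 0 := by nlinarith [sq_nonneg a.1, sq_nonneg a.2]
    apply hD
    rw [ha1, ha2]; ring
  nlinarith [sq_nonneg (2 * b.1 - a.1), sq_nonneg (2 * b.2 - a.2)]

set_option maxHeartbeats 1000000 in
theorem final_lemma (o a b : ℝ × ℝ) (lam : Fin 3 → (ℝ × ℝ) →ᵃ[ℝ] ℝ)
    (h00 : lam 0 o = 1) (h01 : lam 0 (o + a) = 0) (h02 : lam 0 (o + b) = 0)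
    (h10 : lam 1 o = 0) (h11 : lam 1 (o + a) = 1) (h12 : lam 1 (o + b) = 0)
    (h20 : lam 2 o = 0) (h21 : lam 2 (o + a) = 0) (h22 : lam 2 (o + b) = 1)
    (hD : a.1 * b.2 - a.2 * b.1 ≠ 0)
    (q : ℝ × ℝ → ℝ × ℝ) (hq1 : IsQuad (fun x => (q x).1)) (hq2 : IsQuad (fun x => (q x).2))
    (e0 : ∀ x ∈ segment ℝ (o + a) (o + b), (q x).1 * (b - a).2 - (q x).2 * (b - a).1 = 0)
    (e1 : ∀ x ∈ segment ℝ (o + b) o, (q x).1 * b.2 - (q x).2 * b.1 = 0)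
    (e2 : ∀ x ∈ segment ℝ o (o + a), (q x).1 * a.2 - (q x).2 * a.1 = 0)
    (hint : ∀ γ : (ℝ × ℝ) →ᵃ[ℝ] ℝ,
      ∫ x in convexHull ℝ {o, o + a, o + b}, dot (grad2 (⇑γ) x) (q x) = 0)
    (hbubble : ∫ x in convexHull ℝ {o, o + a, o + b},
      dot (perpGrad (fun y => lam 0 y * lam 1 y * lam 2 y) x) (q x) = 0) (x : ℝ × ℝ) : q x = 0 := by
  -- moments against constants
  have hmom : ∀ A B : ℝ, ∫ z in Tri, (A * (q (o + z.1 • a + z.2 • b)).1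
      + B * (q (o + z.1 • a + z.2 • b)).2) = 0 := by
    intro A B
    let l : ℝ × ℝ →L[ℝ] ℝ := A • ContinuousLinearMap.fst ℝ ℝ ℝ + B • ContinuousLinearMap.snd ℝ ℝ ℝ
    have := hint l.toLinearMap.toAffineMap
    have hf : ∀ x, fderiv ℝ (⇑l.toLinearMap.toAffineMap) x = l := fun x => l.hasFDerivAt.fderiv
    simp only [grad2, hf] at this
    have h2 := int_hull o a b hD _ this
    simpa [l, dot] using h2
  set α : ℝ × ℝ → ℝ := fun z => b.2 * (q (o + z.1 • a + z.2 • b)).1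
      + (-b.1) * (q (o + z.1 • a + z.2 • b)).2 with hα
  set β : ℝ × ℝ → ℝ := fun z => (-a.2) * (q (o + z.1 • a + z.2 • b)).1
      + a.1 * (q (o + z.1 • a + z.2 • b)).2 with hβ
  have qα : IsQuad α := (hq1.comp o a b).lin (hq2.comp o a b) b.2 (-b.1)
  have qβ : IsQuad β := (hq1.comp o a b).lin (hq2.comp o a b) (-a.2) a.1
  have iα : ∫ z in Tri, α z = 0 := hmom _ _
  have iβ : ∫ z in Tri, β z = 0 := hmom _ _
  have eα : ∀ t : ℝ, 0 ≤ t → t ≤ 1 → α (0, t) = 0 := by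
    intro t ht0 ht1
    have := e1 (o + t • b) ⟨t, 1 - t, ht0, by linarith, by ring, by ext <;> simp <;> ring⟩
    simp only [hα, zero_smul, add_zero]
    linarith
  have eβ : ∀ t : ℝ, 0 ≤ t → t ≤ 1 → β (t, 0) = 0 := by
    intro t ht0 ht1
    have := e2 (o + t • a) ⟨1 - t, t, by linarith, ht0, by ring, by ext <;> simp <;> ring⟩
    simp only [hβ, zero_smul, add_zero]
    linarith
  have eαβ : ∀ t : ℝ, 0 ≤ t → t ≤ 1 → α (1 - t, t) + β (1 - t, t) = 0 := by
    intro t ht0 ht1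
    have := e0 (o + (1 - t) • a + t • b) ⟨1 - t, t, by linarith, ht0, by ring, by ext <;> simp <;> ring⟩
    simp only [Prod.fst_sub, Prod.snd_sub] at this
    simp only [hα, hβ]
    linarith
  have dq1 : ∀ s t : ℝ, (a.1 * b.2 - a.2 * b.1) * (q (o + s • a + t • b)).1
      = α (s, t) * a.1 + β (s, t) * b.1 := by
    intro s t; simp only [hα, hβ]; ring
  have dq2 : ∀ s t : ℝ, (a.1 * b.2 - a.2 * b.1) * (q (o + s • a + t • b)).2
      = α (s, t) * a.2 + β (s, t) * b.2 := by
    intro s t; simp only [hα, hβ]; ring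
  clear_value α β
  obtain ⟨c0, c1, c2, c3, c4, c5, hc⟩ := qα
  obtain ⟨d0, d1, d2, d3, d4, d5, hd⟩ := qβ
  have i1 := int_Tri_poly α c0 c1 c2 c3 c4 c5 0 0 0 0 0 0 0 0 0 (fun s t => by rw [hc]; ring)
  have i2 := int_Tri_poly β d0 d1 d2 d3 d4 d5 0 0 0 0 0 0 0 0 0 (fun s t => by rw [hd]; ring)
  rw [iα] at i1
  rw [iβ] at i2
  have a1 := eα 0 (by norm_num) (by norm_num)
  have a2 := eα (1/2) (by norm_num) (by norm_num)
  have a3 := eα 1 (by norm_num) (by norm_num)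
  have b1 := eβ 0 (by norm_num) (by norm_num)
  have b2 := eβ (1/2) (by norm_num) (by norm_num)
  have b3 := eβ 1 (by norm_num) (by norm_num)
  have g1 := eαβ 0 (by norm_num) (by norm_num)
  have g2 := eαβ (1/2) (by norm_num) (by norm_num)
  have g3 := eαβ 1 (by norm_num) (by norm_num)
  simp only [hc, hd] at a1 a2 a3 b1 b2 b3 g1 g2 g3
  norm_num at a1 a2 a3 b1 b2 b3 g1 g2 g3
  have hα' : ∀ s t, α (s, t) = c1 * (s - s ^ 2 - 2 * (s * t)) := by
    intro s t
    rw [hc]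
    have z0 : c0 = 0 := by linarith
    have z2 : c2 = 0 := by linarith
    have z5 : c5 = 0 := by linarith
    have z3 : c3 = -c1 := by linarith
    have z4 : c4 = -2 * c1 := by linarith
    rw [z0, z2, z5, z3, z4]; ring
  have hβ' : ∀ s t, β (s, t) = -c1 * (t - t ^ 2 - 2 * (s * t)) := by
    intro s t
    rw [hd]
    have z0 : d0 = 0 := by linarith
    have z1 : d1 = 0 := by linarith
    have z3 : d3 = 0 := by linarith
    have z5 : d5 = -d2 := by linarith
    have z4 : d4 = -2 * d2 := by linarith
    have z2 : d2 = -c1 := by linarith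
    rw [z0, z1, z3, z4, z5, z2]; ring
  simp only [hα', hβ'] at dq1 dq2
  -- the bubble
  obtain ⟨A0, B0, C0, l0⟩ := aff_repr (lam 0)
  obtain ⟨A1, B1, C1, l1⟩ := aff_repr (lam 1)
  obtain ⟨A2, B2, C2, l2⟩ := aff_repr (lam 2)
  simp only [l0, l1, l2, Prod.fst_add, Prod.snd_add] at h00 h01 h02 h10 h11 h12 h20 h21 h22
  simp only [l0, l1, l2, perpGrad_prod] at hbubble
  have hb := int_hull o a b hD _ hbubble
  set D := a.1 * b.2 - a.2 * b.1 with hDd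
  have kA1 : D * A1 = b.2 := by rw [hDd]; linear_combination b.2 * (h11 - h10) - a.2 * (h12 - h10)
  have kB1 : D * B1 = -b.1 := by rw [hDd]; linear_combination a.1 * (h12 - h10) - b.1 * (h11 - h10)
  have kA2 : D * A2 = -a.2 := by rw [hDd]; linear_combination b.2 * (h21 - h20) - a.2 * (h22 - h20)
  have kB2 : D * B2 = a.1 := by rw [hDd]; linear_combination a.1 * (h22 - h20) - b.1 * (h21 - h20)
  have kA0 : D * A0 = a.2 - b.2 := by rw [hDd]; linear_combination b.2 * (h01 - h00) - a.2 * (h02 - h00)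
  have kB0 : D * B0 = b.1 - a.1 := by rw [hDd]; linear_combination a.1 * (h02 - h00) - b.1 * (h01 - h00)
  have m0 : ∀ s t : ℝ, A0 * (o + s • a + t • b).1 + B0 * (o + s • a + t • b).2 + C0 = 1 - s - t := by
    intro s t
    simp only [Prod.fst_add, Prod.snd_add, Prod.smul_fst, Prod.smul_snd, smul_eq_mul]
    linear_combination (1 - s - t) * h00 + s * h01 + t * h02
  have m1 : ∀ s t : ℝ, A1 * (o + s • a + t • b).1 + B1 * (o + s • a + t • b).2 + C1 = s := by
    intro s t
    simp only [Prod.fst_add, Prod.snd_add, Prod.smul_fst, Prod.smul_snd, smul_eq_mul]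
    linear_combination (1 - s - t) * h10 + s * h11 + t * h12
  have m2 : ∀ s t : ℝ, A2 * (o + s • a + t • b).1 + B2 * (o + s • a + t • b).2 + C2 = t := by
    intro s t
    simp only [Prod.fst_add, Prod.snd_add, Prod.smul_fst, Prod.smul_snd, smul_eq_mul]
    linear_combination (1 - s - t) * h20 + s * h21 + t * h22
  simp only [m0, m1, m2, dot] at hb
  have hb2 : ∫ z in Tri, (-c1) * (((z.1 - z.1 ^ 2 - 2 * (z.1 * z.2)) * a.1 - (z.2 - z.2 ^ 2 - 2 * (z.1 * z.2)) * b.1) ^ 2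
      + ((z.1 - z.1 ^ 2 - 2 * (z.1 * z.2)) * a.2 - (z.2 - z.2 ^ 2 - 2 * (z.1 * z.2)) * b.2) ^ 2) = 0 := by
    have := congrArg (fun r => D ^ 2 * r) hb
    simp only [mul_zero] at this
    rw [← integral_const_mul] at this
    rw [← this]
    congr 1
    funext z
    obtain ⟨s, t⟩ := z
    simp only
    have r1 : D * (-(B0 * s * t + B1 * (1 - s - t) * t + B2 * (1 - s - t) * s))
        = -((s - s ^ 2 - 2 * (s * t)) * a.1 - (t - t ^ 2 - 2 * (s * t)) * b.1) := by
      linear_combination (-(s * t)) * kB0 - (1 - s - t) * t * kB1 - (1 - s - t) * s * kB2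
    have r2 : D * (A0 * s * t + A1 * (1 - s - t) * t + A2 * (1 - s - t) * s)
        = -((s - s ^ 2 - 2 * (s * t)) * a.2 - (t - t ^ 2 - 2 * (s * t)) * b.2) := by
      linear_combination ((s * t)) * kA0 + (1 - s - t) * t * kA1 + (1 - s - t) * s * kA2
    have e1 := dq1 s t
    have e2 := dq2 s t
    generalize (q (o + s • a + t • b)).1 = w1 at *
    generalize (q (o + s • a + t • b)).2 = w2 at *
    generalize -(B0 * s * t + B1 * (1 - s - t) * t + B2 * (1 - s - t) * s) = R1 at *
    generalize (A0 * s * t + A1 * (1 - s - t) * t + A2 * (1 - s - t) * s) = R2 at *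
    linear_combination (-(D * w1)) * r1 - (D * w2) * r2
      + ((s - s ^ 2 - 2 * (s * t)) * a.1 - (t - t ^ 2 - 2 * (s * t)) * b.1) * e1
      + ((s - s ^ 2 - 2 * (s * t)) * a.2 - (t - t ^ 2 - 2 * (s * t)) * b.2) * e2
  rw [integral_const_mul] at hb2
  have hc1 : c1 = 0 := by
    have hpos : 0 < a.1 ^ 2 + a.2 ^ 2 - (a.1 * b.1 + a.2 * b.2) + (b.1 ^ 2 + b.2 ^ 2) := by
      exact pos_aux a b hD
    set X := a.1 ^ 2 + a.2 ^ 2 with hX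
    set Y := a.1 * b.1 + a.2 * b.2 with hY
    set Z := b.1 ^ 2 + b.2 ^ 2 with hZ
    have := int_Tri_poly (fun z => ((z.1 - z.1 ^ 2 - 2 * (z.1 * z.2)) * a.1 - (z.2 - z.2 ^ 2 - 2 * (z.1 * z.2)) * b.1) ^ 2
      + ((z.1 - z.1 ^ 2 - 2 * (z.1 * z.2)) * a.2 - (z.2 - z.2 ^ 2 - 2 * (z.1 * z.2)) * b.2) ^ 2)
      0 0 0 X (-2 * Y) Z
      (-2 * X) (-4 * X + 6 * Y) (-4 * Z + 6 * Y) (-2 * Z)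
      X (4 * X - 4 * Y) (4 * X + 4 * Z - 10 * Y) (4 * Z - 4 * Y) Z
      (fun s t => by simp only [hX, hY, hZ]; ring)
    rw [this] at hb2
    rcases mul_eq_zero.1 hb2 with h | h
    · linarith
    · exfalso
      linarith
  -- conclusion
  have hx : x = o + ((lam 1 x) • a) + ((lam 2 x) • b) := by
    rw [l1, l2]
    have hDD : D ≠ 0 := hD
    ext
    · simp only [Prod.fst_add, Prod.smul_fst, smul_eq_mul]
      apply mul_left_cancel₀ hDD
      linear_combination (-a.1 * x.1 + a.1 * o.1) * kA1 + (-a.1 * x.2 + a.1 * o.2) * kB1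
        + (-b.1 * x.1 + b.1 * o.1) * kA2 + (-b.1 * x.2 + b.1 * o.2) * kB2
        - D * a.1 * h10 - D * b.1 * h20 + (x.1 - o.1) * hDd
    · simp only [Prod.snd_add, Prod.smul_snd, smul_eq_mul]
      apply mul_left_cancel₀ hDD
      linear_combination (-a.2 * x.1 + a.2 * o.1) * kA1 + (-a.2 * x.2 + a.2 * o.2) * kB1
        + (-b.2 * x.1 + b.2 * o.1) * kA2 + (-b.2 * x.2 + b.2 * o.2) * kB2
        - D * a.2 * h10 - D * b.2 * h20 + (x.2 - o.2) * hDd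
  rw [hx]
  have f1 := dq1 (lam 1 x) (lam 2 x)
  have f2 := dq2 (lam 1 x) (lam 2 x)
  rw [hc1] at f1 f2
  have hDD : D ≠ 0 := hD
  ext
  · apply mul_left_cancel₀ hDD
    rw [f1]; simp
  · apply mul_left_cancel₀ hDD
    rw [f2]; simp

/-- **Unisolvency of the local BDFM1 degrees of freedom.**
Let `w = p + q` with `p` affine (both components affine functions) and
`q ∈ Ŝ(K)` (components polynomial of total degree ≤ 2, normal component
vanishing on each edge). If all edge normal moments of `w` against affine
functions vanish, all interior moments of `w` against gradients of affine
functions vanish, and the moment of `w` against `∇⊥(λ₀λ₁λ₂)` vanishes,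
then `w = 0`. -/
theorem bdfm1_unisolvency
    (v : Fin 3 → ℝ × ℝ) (hv : AffineIndependent ℝ v)
    (lam : Fin 3 → (ℝ × ℝ) →ᵃ[ℝ] ℝ)
    (hlam : ∀ i j : Fin 3, lam i (v j) = if i = j then 1 else 0)
    (n : Fin 3 → ℝ × ℝ)
    (hn_unit : ∀ i : Fin 3, (n i).1 ^ 2 + (n i).2 ^ 2 = 1)
    (hn_normal : ∀ i : Fin 3, dot (n i) (v (i + 2) - v (i + 1)) = 0)
    (K : Set (ℝ × ℝ)) (hK : K = convexHull ℝ {v 0, v 1, v 2})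
    (p : (ℝ × ℝ) →ᵃ[ℝ] ℝ × ℝ)
    (q : (ℝ × ℝ) → ℝ × ℝ)
    (hq_poly : ∃ P Q : MvPolynomial (Fin 2) ℝ, P.totalDegree ≤ 2 ∧
      Q.totalDegree ≤ 2 ∧ ∀ x : ℝ × ℝ, q x = (pev P x, pev Q x))
    (hq_normal : ∀ i : Fin 3, ∀ x ∈ segment ℝ (v (i + 1)) (v (i + 2)),
      dot (q x) (n i) = 0)
    (w : (ℝ × ℝ) → ℝ × ℝ) (hw : ∀ x : ℝ × ℝ, w x = p x + q x)
    (hedge : ∀ γ : (ℝ × ℝ) →ᵃ[ℝ] ℝ, ∀ i : Fin 3,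
      lineIntegral (fun x => γ x * dot (w x) (n i)) (v (i + 1)) (v (i + 2)) = 0)
    (hint : ∀ γ : (ℝ × ℝ) →ᵃ[ℝ] ℝ,
      ∫ x in K, dot (grad2 (⇑γ) x) (w x) = 0)
    (hbubble :
      ∫ x in K, dot (perpGrad (fun y => lam 0 y * lam 1 y * lam 2 y) x) (w x)
        = 0) :
    ∀ x : ℝ × ℝ, w x = 0 := by

  obtain ⟨P, Q, hP, hQ, hPQ⟩ := hq_poly
  obtain ⟨o, ho⟩ : ∃ o, v 0 = o := ⟨_, rfl⟩
  obtain ⟨a, ha⟩ : ∃ a, v 1 = o + a := ⟨v 1 - o, by abel⟩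
  obtain ⟨b, hb⟩ : ∃ b, v 2 = o + b := ⟨v 2 - o, by abel⟩
  have H := hlam
  have h00 : lam 0 o = 1 := by rw [← ho, H]; simp
  have h01 : lam 0 (o + a) = 0 := by rw [← ha, H]; simp
  have h02 : lam 0 (o + b) = 0 := by rw [← hb, H]; simp
  have h10 : lam 1 o = 0 := by rw [← ho, H]; simp
  have h11 : lam 1 (o + a) = 1 := by rw [← ha, H]; simp
  have h12 : lam 1 (o + b) = 0 := by rw [← hb, H]; simp
  have h20 : lam 2 o = 0 := by rw [← ho, H]; simp
  have h21 : lam 2 (o + a) = 0 := by rw [← ha, H]; simp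
  have h22 : lam 2 (o + b) = 1 := by rw [← hb, H]; simp
  have hD : a.1 * b.2 - a.2 * b.1 ≠ 0 := by
    obtain ⟨A1, B1, C1, l1⟩ := aff_repr (lam 1)
    obtain ⟨A2, B2, C2, l2⟩ := aff_repr (lam 2)
    rw [l1] at h10 h11 h12
    rw [l2] at h20 h21 h22
    simp only [Prod.fst_add, Prod.snd_add] at h11 h12 h21 h22
    have e1 : A1 * a.1 + B1 * a.2 = 1 := by linarith
    have e2 : A1 * b.1 + B1 * b.2 = 0 := by linarith
    have e3 : A2 * a.1 + B2 * a.2 = 0 := by linarith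
    have e4 : A2 * b.1 + B2 * b.2 = 1 := by linarith
    intro h0
    have : (0:ℝ) = 1 := by
      linear_combination (-(A1 * B2 - A2 * B1)) * h0 + (A2 * b.1 + B2 * b.2) * e1
        + e4 - (A2 * a.1 + B2 * a.2) * e2
    norm_num at this
  have hpe : ∀ i : Fin 3, dot (p (v (i + 1))) (n i) = 0 ∧ dot (p (v (i + 2))) (n i) = 0 := by
    intro i
    refine edge_lemma (v (i + 1)) (v (i + 2)) (n i) p w ?_ (lam (i + 1)) (lam (i + 2))
      ?_ ?_ ?_ ?_ (fun γ => hedge γ i)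
    · intro x hx
      have := hq_normal i x hx
      rw [hw]
      simp only [dot, Prod.fst_add, Prod.snd_add] at this ⊢
      linarith
    all_goals rw [hlam]; fin_cases i <;> simp
  have cr : ∀ i : Fin 3, ∀ u, dot u (n i) = 0 →
      u.1 * (v (i + 2) - v (i + 1)).2 - u.2 * (v (i + 2) - v (i + 1)).1 = 0 := fun i u hu =>
    cross_zero (n i) _ u (hn_unit i) (hn_normal i) hu
  have i01 : (0 : Fin 3) + 1 = 1 := rfl
  have i02 : (0 : Fin 3) + 2 = 2 := rfl
  have i11 : (1 : Fin 3) + 1 = 2 := rfl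
  have i12 : (1 : Fin 3) + 2 = 0 := rfl
  have i21 : (2 : Fin 3) + 1 = 0 := rfl
  have i22 : (2 : Fin 3) + 2 = 1 := rfl
  have p0 := hpe 0
  have p1 := hpe 1
  have p2 := hpe 2
  have cr0 := cr 0
  have cr1 := cr 1
  have cr2 := cr 2
  have s0 := hq_normal 0
  have s1 := hq_normal 1
  have s2 := hq_normal 2
  simp only [i01, i02, i11, i12, i21, i22, ho, ha, hb] at p0 p1 p2 cr0 cr1 cr2 s0 s1 s2
  simp only [Prod.fst_sub, Prod.snd_sub, Prod.fst_add, Prod.snd_add] at cr0 cr1 cr2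
  have z0 : p o = 0 := by
    apply vec_zero a b _ hD
    · linarith [cr2 _ p2.1]
    · linarith [cr1 _ p1.2]
  have z1 : p (o + a) = 0 := by
    have k1 := cr2 _ p2.2
    have k2 := cr0 _ p0.1
    apply vec_zero a b _ hD
    · linarith
    · linarith
  have z2 : p (o + b) = 0 := by
    have k1 := cr1 _ p1.1
    have k2 := cr0 _ p0.2
    apply vec_zero a b _ hD
    · linarith
    · linarith
  have hp0 : ∀ x, p x = 0 := by
    intro x
    ext
    · exact aff_zero ((LinearMap.fst ℝ ℝ ℝ).toAffineMap.comp p) o a b hD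
        (by simp [z0]) (by simp [z1]) (by simp [z2]) x
    · exact aff_zero ((LinearMap.snd ℝ ℝ ℝ).toAffineMap.comp p) o a b hD
        (by simp [z0]) (by simp [z1]) (by simp [z2]) x
  have hwq : w = q := by funext x; rw [hw, hp0, zero_add]
  subst hwq
  rw [hK, ho, ha, hb] at hbubble
  rw [hK, ho, ha, hb] at hint
  refine final_lemma o a b lam h00 h01 h02 h10 h11 h12 h20 h21 h22 hD w ?_ ?_ ?_ ?_ ?_ hint hbubble
  · simpa only [hPQ] using isQuad_pev P hP
  · simpa only [hPQ] using isQuad_pev Q hQ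
  · intro x hx
    simp only [Prod.fst_sub, Prod.snd_sub]
    linarith [cr0 _ (s0 x hx)]
  · intro x hx
    linarith [cr1 _ (s1 x hx)]
  · intro x hx
    linarith [cr2 _ (s2 x hx)]
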